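/- For all integers d ≥ 2 and n ≥ 1, E_F(α_d^{⊗n}) ≥ n·log₂(4/3), where α_d^{⊗n} is viewed as a bipartite state on ((ℂ^d)^{⊗n})_A ⊗ ((ℂ^d)^{⊗n})_B by grouping the n first tensor factors on one side and the n second tensor factors on the other. -/

import Mathlib

open scoped BigOperators
open Classical
open scoped ComplexOrder

noncomputable section

/-- Partial trace over the second tensor factor:
`(ptraceSnd M) a a' = ∑ b, M (a,b) (a',b)`. -/
def ptraceSnd {α β : Type*} [Fintype β] (M : Matrix (α × β) (α × β) ℂ) : Matrix α α ℂ :=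
  Matrix.of fun a a' => ∑ b : β, M (a, b) (a', b)

/-- Von Neumann entropy (in bits) of a matrix, via the eigenvalues of a Hermitian matrix
(with the convention `0 * log₂ 0 = 0`, automatic since `Real.logb 2 0 = 0`). -/
def vnEntropy {ι : Type*} [Fintype ι] [DecidableEq ι] (ρ : Matrix ι ι ℂ) : ℝ :=
  if h : ρ.IsHermitian then -∑ i, h.eigenvalues i * Real.logb 2 (h.eigenvalues i) else 0

/-- Entanglement of formation of a bipartite (density) matrix: the infimum of the average
entropy of entanglement over all finite pure-state ensembles for `ρ`. -/
def EoF {α β : Type*} [Fintype α] [DecidableEq α] [Fintype β] [DecidableEq β]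
    (ρ : Matrix (α × β) (α × β) ℂ) : ℝ :=
  sInf {E : ℝ | ∃ (k : ℕ) (p : Fin k → ℝ) (ψ : Fin k → (α × β → ℂ)),
    (∀ i, 0 ≤ p i) ∧ (∑ i, p i = 1) ∧
    (∀ i, ∑ x, Complex.normSq (ψ i x) = 1) ∧
    (∑ i, p i • Matrix.vecMulVec (ψ i) (star (ψ i)) = ρ) ∧
    E = ∑ i, p i * vnEntropy (ptraceSnd (Matrix.vecMulVec (ψ i) (star (ψ i))))}

/-- The antisymmetric projector `P₂^{(d)} = (1/2)(𝟙 - F)` on `ℂ^d ⊗ ℂ^d`. -/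
def asymProj (d : ℕ) : Matrix (Fin d × Fin d) (Fin d × Fin d) ℂ :=
  Matrix.of fun p q => (1 / 2 : ℂ) *
    ((if p.1 = q.1 ∧ p.2 = q.2 then 1 else 0) - (if p.1 = q.2 ∧ p.2 = q.1 then 1 else 0))

/-- The antisymmetric state `α_d = P₂^{(d)} / binom(d,2)`. -/
def antisymState (d : ℕ) : Matrix (Fin d × Fin d) (Fin d × Fin d) ℂ :=
  (1 / (Nat.choose d 2 : ℂ)) • asymProj d

/-- `α_d^{⊗n}`, viewed as a bipartite state on `((ℂ^d)^{⊗n})_A ⊗ ((ℂ^d)^{⊗n})_B`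
(the `n` first tensor factors grouped on the `A` side, the `n` second ones on the `B` side). -/
def alphaPow (d n : ℕ) :
    Matrix ((Fin n → Fin d) × (Fin n → Fin d)) ((Fin n → Fin d) × (Fin n → Fin d)) ℂ :=
  Matrix.of fun p q => ∏ i : Fin n, antisymState d (p.1 i, p.2 i) (q.1 i, q.2 i)

/-- `(P₂^{(d)})^{⊗n}`, viewed as an operator on `((ℂ^d)^{⊗n})_A ⊗ ((ℂ^d)^{⊗n})_B`
(the `n` first tensor factors grouped on the `A` side, the `n` second ones on the `B` side). -/
def asymPow (d n : ℕ) :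
    Matrix ((Fin n → Fin d) × (Fin n → Fin d)) ((Fin n → Fin d) × (Fin n → Fin d)) ℂ :=
  Matrix.of fun p q => ∏ i : Fin n, asymProj d (p.1 i, p.2 i) (q.1 i, q.2 i)

/-- The antisymmetrizer `P_k^{(d)} = (1/k!) ∑_{σ ∈ S_k} sgn(σ) U_σ` on `(ℂ^d)^{⊗k}`. -/
def asymProjK (d k : ℕ) : Matrix (Fin k → Fin d) (Fin k → Fin d) ℂ :=
  Matrix.of fun f g => (1 / (Nat.factorial k) : ℂ) *
    ∑ σ : Equiv.Perm (Fin k), ((Equiv.Perm.sign σ : ℤ) : ℂ) * (if f = g ∘ σ then 1 else 0)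

/-- Quantum conditional mutual information `I(A;B|E) = H(AE) + H(BE) - H(ABE) - H(E)`
(in bits) of a tripartite (density) matrix. -/
def condMutInfo {α β γ : Type*} [Fintype α] [DecidableEq α] [Fintype β] [DecidableEq β]
    [Fintype γ] [DecidableEq γ] (ρ : Matrix ((α × β) × γ) ((α × β) × γ) ℂ) : ℝ :=
  vnEntropy (Matrix.of fun p q : α × γ => ∑ b : β, ρ ((p.1, b), p.2) ((q.1, b), q.2))
  + vnEntropy (Matrix.of fun p q : β × γ => ∑ a : α, ρ ((a, p.1), p.2) ((a, q.1), q.2))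
  - vnEntropy ρ
  - vnEntropy (Matrix.of fun e e' : γ => ∑ a : α, ∑ b : β, ρ ((a, b), e) ((a, b), e'))

/-- Squashed entanglement: `E_sq(ρ_AB) = inf (1/2) I(A;B|E)` over all finite-dimensional
extensions `ρ_ABE` of `ρ_AB`. -/
def Esq {α β : Type*} [Fintype α] [DecidableEq α] [Fintype β] [DecidableEq β]
    (ρ : Matrix (α × β) (α × β) ℂ) : ℝ :=
  sInf {x : ℝ | ∃ (m : ℕ) (σ : Matrix ((α × β) × Fin m) ((α × β) × Fin m) ℂ),
    σ.PosSemidef ∧ σ.trace = 1 ∧ ptraceSnd σ = ρ ∧ x = (1 / 2) * condMutInfo σ}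

/-- The operator norm `‖·‖_∞` of a matrix, acting on Euclidean space. -/
def opNorm {ι : Type*} [Fintype ι] [DecidableEq ι] (M : Matrix ι ι ℂ) : ℝ :=
  ‖Matrix.toEuclideanCLM (𝕜 := ℂ) M‖

/-- A bipartite (density) matrix is separable if it is a finite convex combination of
product density matrices. -/
def IsSeparableMat {α β : Type*} [Fintype α] [Fintype β]
    (σ : Matrix (α × β) (α × β) ℂ) : Prop :=
  ∃ (k : ℕ) (p : Fin k → ℝ) (ρA : Fin k → Matrix α α ℂ) (ρB : Fin k → Matrix β β ℂ),
    (∀ i, 0 ≤ p i) ∧ (∑ i, p i = 1) ∧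
    (∀ i, (ρA i).PosSemidef) ∧ (∀ i, (ρA i).trace = 1) ∧
    (∀ i, (ρB i).PosSemidef) ∧ (∀ i, (ρB i).trace = 1) ∧
    σ = ∑ i, p i • Matrix.kroneckerMap (· * ·) (ρA i) (ρB i)

/-! Let `ψ` be a unit vector in the support of `α_d^{⊗n}`, with reduced state `ρ_A`. The purity of
`ρ_A` is `⟨ψ ⊗ ψ, f^{⊗n} (ψ ⊗ ψ)⟩`, where `f` exchanges the `A`-systems of two copies of a single
site. Because `f` has a positive partial transpose and `ψ ⊗ ψ` is a product vector, replacing every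
`f` by `f + 1/4` does not decrease this expectation. As `ψ ⊗ ψ` is fixed by `(P ⊗ P)^{⊗n}`, with `P`
the antisymmetric projection, each `f + 1/4` may be compressed to `K = (P ⊗ P) (f + 1/4) (P ⊗ P)`,
and a computation with permutations gives
`K² = 5/16 (P ⊗ P) + 1/4 (P ⊗ P) E ≤ 9/16`, where `E` exchanges the two copies. Hence
`K^{⊗n} ≤ (3/4)^n`, the purity of `ρ_A` is at most `(3/4)^n`, and `H(ρ_A) ≥ -log₂ tr ρ_A²` is at
least `n log₂ (4/3)`. Every pure state in an ensemble for `α_d^{⊗n}` is such a `ψ`. -/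

open Matrix
open scoped Kronecker MatrixOrder

section PiKronecker

variable {ι R : Type*} [Fintype ι] [CommSemiring R] {l m n : ι → Type*}

/-- The tensor product `⨂ i, M i` of a finite family of matrices, written in the product basis
(whose elements are indexed by dependent functions); it is used to form the `n`-fold tensor powers
of operators on a single copy of the system. -/
def piKronecker (M : ∀ i, Matrix (m i) (n i) R) : Matrix (∀ i, m i) (∀ i, n i) R :=
  of fun x y => ∏ i, M i (x i) (y i)

lemma piKronecker_apply (M : ∀ i, Matrix (m i) (n i) R) (x : ∀ i, m i) (y : ∀ i, n i) :
    piKronecker M x y = ∏ i, M i (x i) (y i) :=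
  rfl

lemma piKronecker_smul (c : ι → R) (M : ∀ i, Matrix (m i) (n i) R) :
    piKronecker (fun i => c i • M i) = (∏ i, c i) • piKronecker M := by
  ext x y
  simp [piKronecker_apply, Finset.prod_mul_distrib]

lemma conjTranspose_piKronecker [StarRing R] (M : ∀ i, Matrix (m i) (n i) R) :
    (piKronecker M)ᴴ = piKronecker fun i => (M i)ᴴ := by
  ext x y
  simp [piKronecker_apply, star_prod]

lemma piKronecker_permMatrix [∀ i, DecidableEq (m i)] (σ : ∀ i, Equiv.Perm (m i)) :
    piKronecker (fun i => (σ i).permMatrix R) =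
      Equiv.Perm.permMatrix R (Equiv.piCongrRight σ) := by
  ext x y
  simp [piKronecker_apply, PEquiv.toMatrix_apply, Fintype.prod_ite_zero, funext_iff]

lemma piKronecker_one [∀ i, DecidableEq (m i)] :
    piKronecker (fun i => (1 : Matrix (m i) (m i) R)) = 1 := by
  ext x y
  simp [piKronecker_apply, one_apply, Fintype.prod_ite_zero, funext_iff]

variable [DecidableEq ι]

lemma piKronecker_mul [∀ i, Fintype (m i)] (M : ∀ i, Matrix (l i) (m i) R)
    (N : ∀ i, Matrix (m i) (n i) R) :
    piKronecker (fun i => M i * N i) = piKronecker M * piKronecker N := by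
  ext x y
  simp only [piKronecker_apply, mul_apply, ← Finset.prod_mul_distrib]
  exact Fintype.prod_sum _

lemma trace_piKronecker [∀ i, Fintype (m i)] (M : ∀ i, Matrix (m i) (m i) R) :
    (piKronecker M).trace = ∏ i, (M i).trace :=
  (Fintype.prod_sum fun i x => M i x x).symm

lemma piKronecker_add (M N : ∀ i, Matrix (m i) (n i) R) :
    piKronecker (fun i => M i + N i) =
      ∑ s : Finset ι, piKronecker fun i => if i ∈ s then M i else N i := by
  ext x y
  simp only [Matrix.sum_apply, piKronecker_apply, Matrix.add_apply, Fintype.prod_add]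
  refine Finset.sum_congr rfl fun s _ => ?_
  rw [← s.prod_mul_prod_compl]
  congr 1 <;> exact Finset.prod_congr rfl fun i hi => by simp_all

end PiKronecker

section PiKroneckerOrder

variable {ι 𝕜 : Type*} [Fintype ι] [RCLike 𝕜] {m : ι → Type*} [∀ i, Finite (m i)]

lemma posSemidef_piKronecker {M : ∀ i, Matrix (m i) (m i) 𝕜}
    (hM : ∀ i, (M i).PosSemidef) : (piKronecker M).PosSemidef := by
  classical
  have (i : ι) : Fintype (m i) := Fintype.ofFinite _
  choose B hB using fun i => CStarAlgebra.nonneg_iff_eq_star_mul_self.mp (hM i).nonneg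
  rw [show M = fun i => (B i)ᴴ * B i from funext hB, piKronecker_mul, ← conjTranspose_piKronecker]
  exact posSemidef_conjTranspose_mul_self _

lemma piKronecker_mono {M N : ∀ i, Matrix (m i) (m i) 𝕜}
    (hM : ∀ i, 0 ≤ M i) (hMN : ∀ i, M i ≤ N i) : piKronecker M ≤ piKronecker N := by
  classical
  have hN : N = fun i => M i + (N i - M i) := funext fun i => (add_sub_cancel _ _).symm
  have hterm (s : Finset ι) : 0 ≤ piKronecker fun i => if i ∈ s then M i else N i - M i := by
    refine (posSemidef_piKronecker fun i => ?_).nonneg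
    split_ifs
    exacts [nonneg_iff_posSemidef.mp (hM i), hMN i]
  rw [hN, piKronecker_add]
  simpa using Finset.single_le_sum (fun s _ => hterm s) (Finset.mem_univ Finset.univ)

end PiKroneckerOrder

section TensorVec

variable {ι R X Y : Type*} [Fintype ι] [DecidableEq ι] [Fintype X] [Fintype Y]

/-- The product vector `u ⊗ v` of two many-body vectors, regrouped site by site. -/
def tensorVec [Mul R] (u : (ι → X) → R) (v : (ι → Y) → R) : (ι → X × Y) → R :=
  fun z => u (fun i => (z i).1) * v (fun i => (z i).2)

/-- The partial transpose `M ↦ M^Γ` of a bipartite operator with respect to its second factor. -/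
def partialTranspose {α β : Type*} (M : Matrix (α × β) (α × β) R) : Matrix (α × β) (α × β) R :=
  of fun z w => M (z.1, w.2) (w.1, z.2)

lemma sum_arrow_prod [AddCommMonoid R] (f : (ι → X × Y) → R) :
    ∑ z, f z = ∑ x : ι → X, ∑ y : ι → Y, f fun i => (x i, y i) := by
  rw [← Fintype.sum_prod_type']
  exact ((Equiv.arrowProdEquivProdArrow ι (fun _ => X) (fun _ => Y)).symm.sum_comp f).symm

variable [CommSemiring R]

lemma piKronecker_kronecker_mulVec_tensorVec (M : ι → Matrix X X R) (N : ι → Matrix Y Y R)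
    (u : (ι → X) → R) (v : (ι → Y) → R) :
    piKronecker (fun i => M i ⊗ₖ N i) *ᵥ tensorVec u v =
      tensorVec (piKronecker M *ᵥ u) (piKronecker N *ᵥ v) := by
  ext z
  simp only [mulVec, dotProduct, sum_arrow_prod, tensorVec, piKronecker_apply, kroneckerMap_apply,
    Finset.prod_mul_distrib, Finset.sum_mul_sum]
  exact Finset.sum_congr rfl fun x _ => Finset.sum_congr rfl fun y _ => by ring

lemma star_tensorVec_dotProduct_tensorVec [StarRing R] (u : (ι → X) → R) (v : (ι → Y) → R) :
    star (tensorVec u v) ⬝ᵥ tensorVec u v = (star u ⬝ᵥ u) * (star v ⬝ᵥ v) := by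
  simp only [dotProduct, sum_arrow_prod, tensorVec, Pi.star_apply, star_mul', Finset.sum_mul_sum]
  exact Finset.sum_congr rfl fun x _ => Finset.sum_congr rfl fun y _ => by ring

lemma star_tensorVec_dotProduct_piKronecker_mulVec [StarRing R]
    (M : ι → Matrix (X × Y) (X × Y) R) (u : (ι → X) → R) (v : (ι → Y) → R) :
    star (tensorVec u v) ⬝ᵥ piKronecker M *ᵥ tensorVec u v =
      star (tensorVec u (star v)) ⬝ᵥ
        piKronecker (fun i => partialTranspose (M i)) *ᵥ tensorVec u (star v) := by
  simp only [dotProduct, mulVec, sum_arrow_prod, tensorVec, piKronecker_apply, partialTranspose,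
    of_apply, Pi.star_apply, star_mul', star_star, Finset.mul_sum]
  refine Finset.sum_congr rfl fun x _ => Finset.sum_comm.trans (Eq.trans ?_ Finset.sum_comm)
  refine Finset.sum_congr rfl fun x' _ => Finset.sum_comm.trans ?_
  exact Finset.sum_congr rfl fun y _ => Finset.sum_congr rfl fun y' _ => by ring

end TensorVec

section KroneckerNeg

variable {R l m n p : Type*} [Mul R] [HasDistribNeg R]

lemma neg_kronecker (A : Matrix l m R) (B : Matrix n p R) : (-A) ⊗ₖ B = -(A ⊗ₖ B) := by
  ext
  simp

lemma kronecker_neg (A : Matrix l m R) (B : Matrix n p R) : A ⊗ₖ (-B) = -(A ⊗ₖ B) := by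
  ext
  simp

end KroneckerNeg

section StarProjection

lemma isStarProjection_half_one_sub {𝕜 A : Type*} [RCLike 𝕜] [Ring A] [StarRing A]
    [Algebra 𝕜 A] [StarModule 𝕜 A] {s : A} (hs : IsSelfAdjoint s) (hss : s * s = 1) :
    IsStarProjection ((1 / 2 : 𝕜) • (1 - s)) where
  isSelfAdjoint := by
    simp [IsSelfAdjoint, star_smul, hs.star_eq]
  isIdempotentElem := by
    rw [IsIdempotentElem, smul_mul_smul_comm, mul_sub, mul_one, sub_mul, one_mul, hss]
    module

lemma isStarProjection_kronecker {m n R : Type*} [Fintype m] [Fintype n] [CommRing R]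
    [StarRing R] {A : Matrix m m R} {B : Matrix n n R} (hA : IsStarProjection A)
    (hB : IsStarProjection B) :
    IsStarProjection (A ⊗ₖ B) where
  isSelfAdjoint := by
    rw [IsSelfAdjoint, star_eq_conjTranspose, conjTranspose_kronecker, ← star_eq_conjTranspose,
      ← star_eq_conjTranspose, hA.isSelfAdjoint.star_eq, hB.isSelfAdjoint.star_eq]
  isIdempotentElem := by
    rw [IsIdempotentElem, ← mul_kronecker_mul, hA.isIdempotentElem.eq, hB.isIdempotentElem.eq]

end StarProjection

section SwapOperators

variable (α β : Type*) [DecidableEq α] [DecidableEq β]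

/-- The operator on `V ⊗ V` exchanging the two tensor factors. -/
def swapMatrix : Matrix (α × α) (α × α) ℂ :=
  Equiv.Perm.permMatrix ℂ (Equiv.prodComm α α)

/-- The exchange of the first components of two pairs, leaving the second ones in place. -/
def swapFst : Equiv.Perm ((α × β) × (α × β)) where
  toFun z := ((z.2.1, z.1.2), (z.1.1, z.2.2))
  invFun z := ((z.2.1, z.1.2), (z.1.1, z.2.2))
  left_inv _ := rfl
  right_inv _ := rfl

/-- The operator on two copies of `V ⊗ W` exchanging the two copies of `V`. -/
def swapFstMatrix : Matrix ((α × β) × (α × β)) ((α × β) × (α × β)) ℂ :=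
  (swapFst α β).permMatrix ℂ

variable {α β}

lemma permMatrix_kronecker_permMatrix {R : Type*} [MulZeroOneClass R] (σ : Equiv.Perm α)
    (τ : Equiv.Perm β) :
    σ.permMatrix R ⊗ₖ τ.permMatrix R = Equiv.Perm.permMatrix R (Equiv.prodCongr σ τ) := by
  ext x y
  simp [PEquiv.toMatrix_apply, Prod.ext_iff, ← ite_and, and_comm]

lemma isSelfAdjoint_swapMatrix : IsSelfAdjoint (swapMatrix α) :=
  conjTranspose_permMatrix _

lemma isHermitian_swapFstMatrix : (swapFstMatrix α β).IsHermitian :=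
  conjTranspose_permMatrix _

lemma posSemidef_partialTranspose_swapFstMatrix [Finite α] [Finite β] :
    (partialTranspose (swapFstMatrix α β)).PosSemidef := by
  have := Fintype.ofFinite β
  -- `V (b ⊗ b') = ∑ a, (a ⊗ b) ⊗ (a ⊗ b')`.
  let V : Matrix ((α × β) × (α × β)) (β × β) ℂ :=
    of fun x b => if x.1.1 = x.2.1 ∧ (x.1.2, x.2.2) = b then 1 else 0
  convert posSemidef_self_mul_conjTranspose V using 1
  ext x y
  simp only [V, partialTranspose, swapFstMatrix, swapFst, PEquiv.toMatrix_apply,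
    Equiv.toPEquiv_apply, Equiv.coe_fn_mk, Option.mem_def, Option.some.injEq, Prod.mk.injEq,
    ite_and, of_apply, mul_apply, conjTranspose_apply, RCLike.star_def, ite_mul, one_mul, zero_mul,
    Finset.sum_ite_irrel, Finset.sum_ite_eq, Finset.mem_univ, ↓reduceIte, Finset.sum_const_zero]
  grind

variable [Fintype α] [Fintype β]

lemma swapMatrix_mul_self : swapMatrix α * swapMatrix α = 1 := by
  rw [swapMatrix, ← permMatrix_mul, ← permMatrix_one]
  rfl

lemma swapFstMatrix_mul_self : swapFstMatrix α β * swapFstMatrix α β = 1 := by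
  rw [swapFstMatrix, ← permMatrix_mul, ← permMatrix_one]
  rfl

lemma swapMatrix_mul_kronecker (A B : Matrix α α ℂ) :
    swapMatrix α * (A ⊗ₖ B) = (B ⊗ₖ A) * swapMatrix α := by
  ext x y
  simp [swapMatrix, PEquiv.toMatrix_toPEquiv_mul, PEquiv.mul_toMatrix_toPEquiv, mul_comm]

lemma swapFstMatrix_conj_swap_left :
    swapFstMatrix α α * (swapMatrix α ⊗ₖ 1) * swapFstMatrix α α =
      (swapMatrix α ⊗ₖ 1) * swapFstMatrix α α * (swapMatrix α ⊗ₖ 1) := by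
  simp only [swapFstMatrix, swapMatrix, ← permMatrix_one, permMatrix_kronecker_permMatrix,
    ← permMatrix_mul]
  rfl

lemma swapFstMatrix_conj_swap_right :
    swapFstMatrix α α * (1 ⊗ₖ swapMatrix α) * swapFstMatrix α α =
      (1 ⊗ₖ swapMatrix α) * swapFstMatrix α α * (1 ⊗ₖ swapMatrix α) := by
  simp only [swapFstMatrix, swapMatrix, ← permMatrix_one, permMatrix_kronecker_permMatrix,
    ← permMatrix_mul]
  rfl

lemma swapFstMatrix_conj_swap_swap :
    swapFstMatrix α α * (swapMatrix α ⊗ₖ swapMatrix α) * swapFstMatrix α α =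
      (swapMatrix α ⊗ₖ swapMatrix α) * swapMatrix (α × α) := by
  simp only [swapFstMatrix, swapMatrix, permMatrix_kronecker_permMatrix, ← permMatrix_mul]
  rfl

end SwapOperators

section AntisymmetricProjection

variable (d : ℕ)

lemma asymProj_eq : asymProj d = (1 / 2 : ℂ) • (1 - swapMatrix (Fin d)) := by
  ext x y
  simp [asymProj, swapMatrix, PEquiv.toMatrix_apply, one_apply, Prod.ext_iff, and_comm]

lemma swapMatrix_mul_asymProj : swapMatrix (Fin d) * asymProj d = -asymProj d := by
  simp [asymProj_eq, mul_sub, swapMatrix_mul_self, ← smul_neg]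

lemma asymProj_mul_swapMatrix : asymProj d * swapMatrix (Fin d) = -asymProj d := by
  simp [asymProj_eq, sub_mul, swapMatrix_mul_self, ← smul_neg]

lemma isStarProjection_asymProj : IsStarProjection (asymProj d) := by
  rw [asymProj_eq]
  exact isStarProjection_half_one_sub isSelfAdjoint_swapMatrix swapMatrix_mul_self

/-- The compression of the exchange of the first tensor factors of two pairs to the pairs of
antisymmetric vectors. -/
def compressedSwap :
    Matrix ((Fin d × Fin d) × (Fin d × Fin d)) ((Fin d × Fin d) × (Fin d × Fin d)) ℂ :=
  (asymProj d ⊗ₖ asymProj d) * swapFstMatrix (Fin d) (Fin d) * (asymProj d ⊗ₖ asymProj d)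

variable {d}

lemma asymProj_kronecker_asymProj : asymProj d ⊗ₖ asymProj d =
    (1 / 4 : ℂ) • (1 - swapMatrix (Fin d) ⊗ₖ 1 - 1 ⊗ₖ swapMatrix (Fin d)
      + swapMatrix (Fin d) ⊗ₖ swapMatrix (Fin d)) := by
  simp only [asymProj_eq, smul_kronecker, kronecker_smul, sub_eq_add_neg, add_kronecker,
    kronecker_add, neg_kronecker, kronecker_neg, one_kronecker_one]
  module

lemma isStarProjection_asymProj_kronecker : IsStarProjection (asymProj d ⊗ₖ asymProj d) :=
  isStarProjection_kronecker (isStarProjection_asymProj d) (isStarProjection_asymProj d)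

lemma swapFstMatrix_conj_asymProj :
    swapFstMatrix (Fin d) (Fin d) * (asymProj d ⊗ₖ asymProj d) * swapFstMatrix (Fin d) (Fin d) =
      (1 / 4 : ℂ) • (1
        - (swapMatrix (Fin d) ⊗ₖ 1) * swapFstMatrix (Fin d) (Fin d) * (swapMatrix (Fin d) ⊗ₖ 1)
        - (1 ⊗ₖ swapMatrix (Fin d)) * swapFstMatrix (Fin d) (Fin d) * (1 ⊗ₖ swapMatrix (Fin d))
        + (swapMatrix (Fin d) ⊗ₖ swapMatrix (Fin d)) * swapMatrix (Fin d × Fin d)) := by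
  simp only [asymProj_kronecker_asymProj, mul_smul_comm, smul_mul_assoc, mul_add, add_mul,
    mul_sub, sub_mul, mul_one, swapFstMatrix_mul_self, swapFstMatrix_conj_swap_left,
    swapFstMatrix_conj_swap_right, swapFstMatrix_conj_swap_swap]

lemma compressedSwap_mul_self : compressedSwap d * compressedSwap d =
    (1 / 4 : ℂ) • (asymProj d ⊗ₖ asymProj d) - (1 / 2 : ℂ) • compressedSwap d +
      (1 / 4 : ℂ) • ((asymProj d ⊗ₖ asymProj d) * swapMatrix (Fin d × Fin d)) := by
  set P := asymProj d ⊗ₖ asymProj d with hP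
  set f := swapFstMatrix (Fin d) (Fin d) with hf
  have hg : compressedSwap d = P * f * P := rfl
  have hPP : P * P = P := isStarProjection_asymProj_kronecker.isIdempotentElem
  have hPE : swapMatrix (Fin d × Fin d) * P = P * swapMatrix (Fin d × Fin d) := by
    rw [hP, swapMatrix_mul_kronecker]
  have left₁ : P * (swapMatrix (Fin d) ⊗ₖ 1) = -P := by
    rw [hP, ← mul_kronecker_mul, asymProj_mul_swapMatrix, mul_one, neg_kronecker]
  have left₂ : P * (1 ⊗ₖ swapMatrix (Fin d)) = -P := by
    rw [hP, ← mul_kronecker_mul, asymProj_mul_swapMatrix, mul_one, kronecker_neg]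
  have left₁₂ : P * (swapMatrix (Fin d) ⊗ₖ swapMatrix (Fin d)) = P := by
    rw [hP, ← mul_kronecker_mul, asymProj_mul_swapMatrix, neg_kronecker, kronecker_neg, neg_neg]
  have right₁ : (swapMatrix (Fin d) ⊗ₖ 1) * P = -P := by
    rw [hP, ← mul_kronecker_mul, swapMatrix_mul_asymProj, one_mul, neg_kronecker]
  have right₂ : (1 ⊗ₖ swapMatrix (Fin d)) * P = -P := by
    rw [hP, ← mul_kronecker_mul, swapMatrix_mul_asymProj, one_mul, kronecker_neg]
  calc compressedSwap d * compressedSwap d = P * (f * P * f) * P := by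
        simp only [hg, mul_assoc]
        simp only [← mul_assoc P P, hPP]
    _ = (1 / 4 : ℂ) • (P * P - (-P) * f * (-P) - (-P) * f * (-P) +
          P * swapMatrix (Fin d × Fin d) * P) := by
        rw [swapFstMatrix_conj_asymProj]
        simp only [mul_smul_comm, smul_mul_assoc, mul_add, add_mul, mul_sub, sub_mul, mul_one,
          ← mul_assoc, left₁, left₂, left₁₂]
        simp only [mul_assoc, right₁, right₂, hf]
    _ = _ := by
        rw [mul_assoc P, hPE, ← mul_assoc, hPP, hg]
        simp only [neg_mul, mul_neg, neg_neg]
        module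

-- The shift `1 / 4` is the one that cancels the linear term of `compressedSwap_mul_self`.
lemma compressedSwap_add_mul_self :
    (compressedSwap d + (1 / 4 : ℂ) • (asymProj d ⊗ₖ asymProj d)) *
        (compressedSwap d + (1 / 4 : ℂ) • (asymProj d ⊗ₖ asymProj d)) =
      (5 / 16 : ℂ) • (asymProj d ⊗ₖ asymProj d) +
        (1 / 4 : ℂ) • ((asymProj d ⊗ₖ asymProj d) * swapMatrix (Fin d × Fin d)) := by
  have hPP := (isStarProjection_asymProj_kronecker (d := d)).isIdempotentElem.eq
  have hPg : (asymProj d ⊗ₖ asymProj d) * compressedSwap d = compressedSwap d := by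
    simp only [compressedSwap, ← mul_assoc, hPP]
  have hgP : compressedSwap d * (asymProj d ⊗ₖ asymProj d) = compressedSwap d := by
    simp only [compressedSwap, mul_assoc, hPP]
  simp only [mul_add, add_mul, mul_smul_comm, smul_mul_assoc, hPP, hPg, hgP,
    compressedSwap_mul_self]
  module

lemma asymProj_kronecker_mul_swapMatrix_le :
    (asymProj d ⊗ₖ asymProj d) * swapMatrix (Fin d × Fin d) ≤ asymProj d ⊗ₖ asymProj d := by
  set P := asymProj d ⊗ₖ asymProj d with hP
  set E := swapMatrix (Fin d × Fin d) with hE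
  have hcomm : Commute P E := by rw [hP, hE, Commute, SemiconjBy, swapMatrix_mul_kronecker]
  have hproj : IsStarProjection ((1 / 2 : ℂ) • (1 - E)) :=
    isStarProjection_half_one_sub isSelfAdjoint_swapMatrix swapMatrix_mul_self
  have hdiff : P - P * E = (2 : ℂ) • (P * ((1 / 2 : ℂ) • (1 - E))) := by
    rw [mul_smul_comm, mul_sub, mul_one]
    module
  rw [← sub_nonneg, hdiff]
  refine smul_nonneg (by norm_num) (isStarProjection_asymProj_kronecker.mul hproj ?_).nonneg
  exact ((Commute.one_right P).sub_right hcomm).smul_right _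

lemma isHermitian_compressedSwap : (compressedSwap d).IsHermitian := by
  have h := isHermitian_mul_mul_conjTranspose (asymProj d ⊗ₖ asymProj d)
    (isHermitian_swapFstMatrix (α := Fin d) (β := Fin d))
  rwa [← star_eq_conjTranspose, isStarProjection_asymProj_kronecker.isSelfAdjoint.star_eq] at h

lemma compressedSwap_add_mul_self_le :
    (compressedSwap d + (1 / 4 : ℂ) • (asymProj d ⊗ₖ asymProj d)) *
        (compressedSwap d + (1 / 4 : ℂ) • (asymProj d ⊗ₖ asymProj d)) ≤ (9 / 16 : ℂ) • 1 :=
  calc _ = (5 / 16 : ℂ) • (asymProj d ⊗ₖ asymProj d) +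
        (1 / 4 : ℂ) • ((asymProj d ⊗ₖ asymProj d) * swapMatrix (Fin d × Fin d)) :=
      compressedSwap_add_mul_self
    _ ≤ (5 / 16 : ℂ) • (asymProj d ⊗ₖ asymProj d) + (1 / 4 : ℂ) • (asymProj d ⊗ₖ asymProj d) := by
      gcongr
      exact asymProj_kronecker_mul_swapMatrix_le
    _ = (9 / 16 : ℂ) • (asymProj d ⊗ₖ asymProj d) := by module
    _ ≤ (9 / 16 : ℂ) • 1 := by
      gcongr
      exact isStarProjection_asymProj_kronecker.le_one

end AntisymmetricProjection

section LoewnerOrder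

variable {m 𝕜 : Type*} [Fintype m] [RCLike 𝕜]

lemma star_dotProduct_mulVec_le {A B : Matrix m m 𝕜} (h : A ≤ B) (x : m → 𝕜) :
    star x ⬝ᵥ A *ᵥ x ≤ star x ⬝ᵥ B *ᵥ x := by
  have := (le_iff.mp h).dotProduct_mulVec_nonneg x
  rwa [sub_mulVec, dotProduct_sub, sub_nonneg] at this

lemma star_dotProduct_compress_mulVec {Q : Matrix m m 𝕜} (hQ : Q.IsHermitian) (M : Matrix m m 𝕜)
    {x : m → 𝕜} (hx : Q *ᵥ x = x) : star x ⬝ᵥ (Q * M * Q) *ᵥ x = star x ⬝ᵥ M *ᵥ x := by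
  have hx' : star x ᵥ* Q = star x := by rw [← hQ.eq, ← star_mulVec, hx]
  rw [← mulVec_mulVec, hx, ← mulVec_mulVec, dotProduct_mulVec, hx']

lemma le_smul_one_of_mul_self_le [DecidableEq m] {A : Matrix m m 𝕜} (hA : A.IsHermitian) {c : 𝕜}
    (hc : 0 < c) (h : A * A ≤ c ^ 2 • 1) : A ≤ c • 1 := by
  have hcA : (c • 1 - A).IsHermitian :=
    (isHermitian_one.smul (IsSelfAdjoint.of_nonneg hc.le)).sub hA
  have hdecomp : c • 1 - A =
      (2 * c)⁻¹ • ((c • 1 - A) * (c • 1 - A)ᴴ + (c ^ 2 • 1 - A * A)) := by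
    rw [hcA.eq]
    simp only [sub_mul, mul_sub, smul_mul_assoc, mul_smul_comm, one_mul, mul_one]
    match_scalars <;> field_simp <;> ring
  rw [← sub_nonneg, hdecomp]
  refine smul_nonneg (by positivity) (add_nonneg ?_ (sub_nonneg.mpr h))
  exact (posSemidef_self_mul_conjTranspose _).nonneg

end LoewnerOrder

section Purity

variable {ι α β : Type*}

lemma posSemidef_ptraceSnd_vecMulVec [Finite α] [Fintype β] (ψ : α × β → ℂ) :
    (ptraceSnd (vecMulVec ψ (star ψ))).PosSemidef :=
  posSemidef_self_mul_conjTranspose (of fun a b => ψ (a, b))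

lemma trace_ptraceSnd [Fintype α] [Fintype β]
    (M : Matrix (α × β) (α × β) ℂ) : (ptraceSnd M).trace = M.trace :=
  (Fintype.sum_prod_type fun p => M p p).symm

lemma partialTranspose_add_smul_one {R : Type*} [CommSemiring R] [DecidableEq α] [DecidableEq β]
    (M : Matrix (α × β) (α × β) R) (c : R) :
    partialTranspose (M + c • 1) = partialTranspose M + c • 1 := by
  ext x y
  simp [partialTranspose, one_apply, Prod.ext_iff, eq_comm]

/-- A vector of `A^{⊗n} ⊗ B^{⊗n}` regrouped site by site as a vector of `(A ⊗ B)^{⊗n}`. -/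
def sitewise (ψ : (ι → α) × (ι → β) → ℂ) : (ι → α × β) → ℂ :=
  ψ ∘ Equiv.arrowProdEquivProdArrow ι (fun _ => α) (fun _ => β)

variable [Fintype ι] [DecidableEq ι] [Fintype α] [DecidableEq α] [Fintype β] [DecidableEq β]

lemma trace_ptraceSnd_vecMulVec_mul_self (ψ : (ι → α) × (ι → β) → ℂ) :
    (ptraceSnd (vecMulVec ψ (star ψ)) * ptraceSnd (vecMulVec ψ (star ψ))).trace =
      star (tensorVec (sitewise ψ) (sitewise ψ)) ⬝ᵥ
        piKronecker (fun _ => swapFstMatrix α β) *ᵥ tensorVec (sitewise ψ) (sitewise ψ) := by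
  simp only [swapFstMatrix, piKronecker_permMatrix, permMatrix_mulVec, dotProduct, sum_arrow_prod,
    trace, diag_apply, mul_apply, ptraceSnd, of_apply, vecMulVec_apply, Finset.sum_mul_sum]
  refine Finset.sum_congr rfl fun a _ => Eq.trans ?_ Finset.sum_comm
  refine Finset.sum_congr rfl fun a' _ => Finset.sum_comm.trans ?_
  refine Finset.sum_congr rfl fun b _ => Finset.sum_congr rfl fun b' _ => ?_
  simp only [tensorVec, sitewise, swapFst, Pi.star_apply, Function.comp_apply, star_mul',
    Equiv.arrowProdEquivProdArrow_apply, Equiv.piCongrRight_apply, Equiv.coe_fn_mk, Pi.map_apply]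
  ring

-- The exchange is not positive, so `piKronecker_mono` does not apply directly; on product vectors
-- every factor may first be replaced by its partial transpose, which is.
lemma star_tensorVec_dotProduct_swapFstMatrix_le (u v : (ι → α × β) → ℂ) {c : ℂ} (hc : 0 ≤ c) :
    star (tensorVec u v) ⬝ᵥ piKronecker (fun _ => swapFstMatrix α β) *ᵥ tensorVec u v ≤
      star (tensorVec u v) ⬝ᵥ
        piKronecker (fun _ => swapFstMatrix α β + c • 1) *ᵥ tensorVec u v := by
  rw [star_tensorVec_dotProduct_piKronecker_mulVec,
    star_tensorVec_dotProduct_piKronecker_mulVec (fun _ => swapFstMatrix α β + c • 1)]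
  simp only [partialTranspose_add_smul_one]
  refine star_dotProduct_mulVec_le (piKronecker_mono (fun _ => ?_) fun _ => ?_) _
  · exact posSemidef_partialTranspose_swapFstMatrix.nonneg
  · exact le_add_of_nonneg_right (smul_nonneg hc zero_le_one)

end Purity

section PurityBound

variable {ι : Type*} [Fintype ι] {d : ℕ}

lemma piKronecker_compressedSwap_le :
    piKronecker (fun _ : ι => compressedSwap d + (1 / 4 : ℂ) • (asymProj d ⊗ₖ asymProj d)) ≤
      ((3 / 4 : ℂ) ^ Fintype.card ι) • 1 := by
  set K := compressedSwap d + (1 / 4 : ℂ) • (asymProj d ⊗ₖ asymProj d)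
  have hK : K.IsHermitian := isHermitian_compressedSwap.add
    ((IsSelfAdjoint.of_nonneg (by positivity : (0 : ℂ) ≤ 1 / 4)).smul
      isStarProjection_asymProj_kronecker.isSelfAdjoint)
  have hKK : 0 ≤ K * K := by simpa only [hK.eq] using (posSemidef_self_mul_conjTranspose K).nonneg
  refine le_smul_one_of_mul_self_le ?_ (by positivity) ?_
  · rw [IsHermitian, conjTranspose_piKronecker]
    simp only [hK.eq]
  · calc piKronecker (fun _ : ι => K) * piKronecker (fun _ => K)
        = piKronecker fun _ => K * K := (piKronecker_mul _ _).symm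
      _ ≤ piKronecker fun _ => (9 / 16 : ℂ) • 1 :=
        piKronecker_mono (fun _ => hKK) fun _ => compressedSwap_add_mul_self_le
      _ = ((3 / 4 : ℂ) ^ Fintype.card ι) ^ 2 • 1 := by
        rw [piKronecker_smul, piKronecker_one, Finset.prod_const, Finset.card_univ, ← pow_mul,
          mul_comm, pow_mul]
        norm_num

lemma trace_ptraceSnd_mul_self_le [DecidableEq ι] {ψ : (ι → Fin d) × (ι → Fin d) → ℂ}
    (hsupp : piKronecker (fun _ => asymProj d) *ᵥ sitewise ψ = sitewise ψ)
    (hunit : star ψ ⬝ᵥ ψ = 1) :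
    (ptraceSnd (vecMulVec ψ (star ψ)) * ptraceSnd (vecMulVec ψ (star ψ))).trace ≤
      (3 / 4 : ℂ) ^ Fintype.card ι := by
  set P := asymProj d ⊗ₖ asymProj d with hP
  set f := swapFstMatrix (Fin d) (Fin d) with hf
  set Φ := tensorVec (sitewise ψ) (sitewise ψ) with hΦ
  have hproj : piKronecker (fun _ => P) *ᵥ Φ = Φ := by
    rw [hΦ, piKronecker_kronecker_mulVec_tensorVec, hsupp]
  have hherm : (piKronecker fun _ : ι => P).IsHermitian := by
    rw [IsHermitian, conjTranspose_piKronecker]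
    simp only [← star_eq_conjTranspose, hP,
      isStarProjection_asymProj_kronecker.isSelfAdjoint.star_eq]
  have hcompress : piKronecker (fun _ : ι => compressedSwap d + (1 / 4 : ℂ) • P) =
      piKronecker (fun _ => P) * piKronecker (fun _ => f + (1 / 4 : ℂ) • 1) *
        piKronecker fun _ => P := by
    simp only [← piKronecker_mul, mul_add, add_mul, mul_smul_comm, smul_mul_assoc, mul_one,
      isStarProjection_asymProj_kronecker.isIdempotentElem.eq, compressedSwap, hP, hf]
  have hnorm : star Φ ⬝ᵥ Φ = 1 := by
    have : star (sitewise ψ) ⬝ᵥ sitewise ψ = star ψ ⬝ᵥ ψ :=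
      (Equiv.arrowProdEquivProdArrow ι _ _).sum_comp fun p => star (ψ p) * ψ p
    rw [hΦ, star_tensorVec_dotProduct_tensorVec, this, hunit, mul_one]
  calc (ptraceSnd (vecMulVec ψ (star ψ)) * ptraceSnd (vecMulVec ψ (star ψ))).trace
      = star Φ ⬝ᵥ piKronecker (fun _ => f) *ᵥ Φ :=
        trace_ptraceSnd_vecMulVec_mul_self ψ
    _ ≤ star Φ ⬝ᵥ piKronecker (fun _ => f + (1 / 4 : ℂ) • 1) *ᵥ Φ :=
        star_tensorVec_dotProduct_swapFstMatrix_le _ _ (by positivity)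
    _ = star Φ ⬝ᵥ piKronecker (fun _ => compressedSwap d + (1 / 4 : ℂ) • P) *ᵥ Φ := by
        rw [hcompress, star_dotProduct_compress_mulVec hherm _ hproj]
    _ ≤ star Φ ⬝ᵥ ((3 / 4 : ℂ) ^ Fintype.card ι • 1 : Matrix _ _ ℂ) *ᵥ Φ :=
        star_dotProduct_mulVec_le piKronecker_compressedSwap_le Φ
    _ = (3 / 4 : ℂ) ^ Fintype.card ι := by
        rw [smul_mulVec, one_mulVec, dotProduct_smul, hnorm, smul_eq_mul, mul_one]

end PurityBound

section Entropy

lemma sum_mul_logb_le_logb_of_sum_sq_le {ι : Type*} {s : Finset ι} {p : ι → ℝ} {b c : ℝ}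
    (hb : 1 < b) (hp : ∀ i ∈ s, 0 ≤ p i) (hsum : ∑ i ∈ s, p i = 1) (hc : ∑ i ∈ s, p i ^ 2 ≤ c) :
    ∑ i ∈ s, p i * Real.logb b (p i) ≤ Real.logb b c := by
  have hpos (i) (hi : i ∈ s) : 0 < p i ^ p i := by
    rcases (hp i hi).eq_or_lt with h | h
    · simp [← h]
    · exact Real.rpow_pos_of_pos h _
  have hlog (i) (hi : i ∈ s) : Real.logb b (p i ^ p i) = p i * Real.logb b (p i) := by
    rcases (hp i hi).eq_or_lt with h | h
    · simp [← h]
    · exact Real.logb_rpow_eq_mul_logb_of_pos h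
  calc ∑ i ∈ s, p i * Real.logb b (p i) = Real.logb b (∏ i ∈ s, p i ^ p i) := by
        rw [Real.logb_prod _ _ fun i hi => (hpos i hi).ne']
        exact Finset.sum_congr rfl fun i hi => (hlog i hi).symm
    _ ≤ Real.logb b c := by
        refine Real.logb_le_logb_of_le hb (Finset.prod_pos hpos) (le_trans ?_ hc)
        simpa only [sq] using Real.geom_mean_le_arith_mean_weighted s p p hp hsum hp

variable {m 𝕜 : Type*} [Fintype m] [DecidableEq m] [RCLike 𝕜]

lemma trace_mul_self_eq_sum_eigenvalues_sq {A : Matrix m m 𝕜} (hA : A.IsHermitian) :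
    (A * A).trace = ∑ i, (hA.eigenvalues i : 𝕜) ^ 2 := by
  nth_rw 1 2 [hA.spectral_theorem]
  rw [← map_mul, Unitary.conjStarAlgAut_apply, trace_mul_cycle, Unitary.coe_star_mul_self, one_mul,
    diagonal_mul_diagonal, trace_diagonal]
  simp [sq]

lemma sum_eigenvalues_eq_one {A : Matrix m m 𝕜} (hA : A.IsHermitian) (htr : A.trace = 1) :
    ∑ i, hA.eigenvalues i = 1 := by
  have := hA.trace_eq_sum_eigenvalues.symm.trans htr
  exact_mod_cast this

lemma neg_logb_le_vnEntropy {ρ : Matrix m m ℂ} (hρ : ρ.PosSemidef) (htr : ρ.trace = 1) {c : ℝ}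
    (hc : (ρ * ρ).trace ≤ c) : -Real.logb 2 c ≤ vnEntropy ρ := by
  have hH := hρ.isHermitian
  rw [trace_mul_self_eq_sum_eigenvalues_sq hH] at hc
  rw [vnEntropy, dif_pos hH, neg_le_neg_iff]
  exact sum_mul_logb_le_logb_of_sum_sq_le one_lt_two (fun i _ => hρ.eigenvalues_nonneg i)
    (sum_eigenvalues_eq_one hH htr) (Complex.real_le_real.mp (by simpa using hc))

end Entropy

section EntanglementOfFormation

variable {m α β : Type*} [Fintype m] [Fintype α] [Fintype β]

lemma star_dotProduct_self_eq_sum_normSq (v : m → ℂ) :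
    star v ⬝ᵥ v = (∑ x, Complex.normSq (v x) : ℝ) := by
  simp [dotProduct, Complex.normSq_eq_conj_mul_self]

lemma sum_eigenvalues_smul_vecMulVec [DecidableEq m] {A : Matrix m m ℂ} (hA : A.IsHermitian) :
    ∑ i, hA.eigenvalues i •
      vecMulVec (hA.eigenvectorBasis i) (star (hA.eigenvectorBasis i : m → ℂ)) = A := by
  conv_rhs => rw [hA.spectral_theorem, Unitary.conjStarAlgAut_apply]
  ext x y
  rw [mul_apply, Matrix.sum_apply]
  refine Finset.sum_congr rfl fun i _ => ?_
  simp only [Matrix.smul_apply, vecMulVec_apply, mul_diagonal, Pi.star_apply, star_apply,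
    IsHermitian.eigenvectorUnitary_apply, Function.comp_apply, Complex.real_smul,
    Complex.coe_algebraMap]
  ring

lemma mulVec_eq_of_sum_smul_vecMulVec {κ : Type*} [Fintype κ] {p : κ → ℝ} (hp : ∀ i, 0 ≤ p i)
    {ψ : κ → m → ℂ} {Q : Matrix m m ℂ}
    (hQ : Q * ∑ i, p i • vecMulVec (ψ i) (star (ψ i)) = ∑ i, p i • vecMulVec (ψ i) (star (ψ i)))
    {i : κ} (hi : p i ≠ 0) : Q *ᵥ ψ i = ψ i := by
  have hconj (j : κ) : (1 - Q) * vecMulVec (ψ j) (star (ψ j)) * (1 - Q)ᴴ =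
      vecMulVec ((1 - Q) *ᵥ ψ j) (star ((1 - Q) *ᵥ ψ j)) := by
    rw [mul_vecMulVec, vecMulVec_mul, star_mulVec]
  have hzero : ∑ j, p j • vecMulVec ((1 - Q) *ᵥ ψ j) (star ((1 - Q) *ᵥ ψ j)) = 0 :=
    calc _ = (1 - Q) * (∑ j, p j • vecMulVec (ψ j) (star (ψ j))) * (1 - Q)ᴴ := by
          simp only [← hconj, Finset.mul_sum, Finset.sum_mul, mul_smul_comm, smul_mul_assoc]
      _ = 0 := by rw [sub_mul, one_mul, hQ, sub_self, zero_mul]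
  have hnonneg (j : κ) : 0 ≤ p j • vecMulVec ((1 - Q) *ᵥ ψ j) (star ((1 - Q) *ᵥ ψ j)) :=
    ((posSemidef_vecMulVec_self_star _).smul (hp j)).nonneg
  have hterm := (Finset.sum_eq_zero_iff_of_nonneg fun j _ => hnonneg j).mp hzero i
    (Finset.mem_univ i)
  have hker : (1 - Q) *ᵥ ψ i = 0 := by simpa [hi] using hterm
  rwa [sub_mulVec, one_mulVec, sub_eq_zero, eq_comm] at hker

lemma le_EoF [DecidableEq α] [DecidableEq β] {ρ Q : Matrix (α × β) (α × β) ℂ} {c : ℝ}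
    (hρ : ρ.PosSemidef) (htr : ρ.trace = 1) (hQ : Q * ρ = ρ)
    (hc : ∀ ψ : α × β → ℂ, star ψ ⬝ᵥ ψ = 1 → Q *ᵥ ψ = ψ →
      c ≤ vnEntropy (ptraceSnd (vecMulVec ψ (star ψ)))) :
    c ≤ EoF ρ := by
  refine le_csInf ?_ ?_
  · let e := (Fintype.equivFin (α × β)).symm
    have hH := hρ.isHermitian
    refine ⟨_, _, hH.eigenvalues ∘ e, fun i => hH.eigenvectorBasis (e i),
      fun i => hρ.eigenvalues_nonneg _, ?_, fun i => ?_, ?_, rfl⟩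
    · exact (e.sum_comp _).trans (sum_eigenvalues_eq_one hH htr)
    · have hnorm := EuclideanSpace.norm_sq_eq (hH.eigenvectorBasis (e i))
      rw [hH.eigenvectorBasis.orthonormal.1 (e i), one_pow] at hnorm
      simpa only [Complex.normSq_eq_norm_sq] using hnorm.symm
    · exact (e.sum_comp _).trans (sum_eigenvalues_smul_vecMulVec hH)
  · rintro E ⟨k, p, ψ, hp, hsum, hunit, rfl, rfl⟩
    have hle (i : Fin k) :
        p i * c ≤ p i * vnEntropy (ptraceSnd (vecMulVec (ψ i) (star (ψ i)))) := by
      rcases eq_or_ne (p i) 0 with hi | hi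
      · simp [hi]
      · refine mul_le_mul_of_nonneg_left (hc _ ?_ (mulVec_eq_of_sum_smul_vecMulVec hp hQ hi)) (hp i)
        rw [star_dotProduct_self_eq_sum_normSq, hunit, Complex.ofReal_one]
    calc c = ∑ i, p i * c := by rw [← Finset.sum_mul, hsum, one_mul]
      _ ≤ _ := Finset.sum_le_sum fun i _ => hle i

end EntanglementOfFormation

section AntisymmetricState

variable {d n : ℕ}

lemma trace_asymProj : (asymProj d).trace = (d.choose 2 : ℂ) := by
  have hswap : (swapMatrix (Fin d)).trace = d := by
    simp [trace, swapMatrix, PEquiv.toMatrix_apply, Fintype.sum_prod_type, Prod.ext_iff, ite_and]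
  rw [asymProj_eq, trace_smul, trace_sub, trace_one, hswap, Nat.cast_choose_two]
  simp only [Fintype.card_prod, Fintype.card_fin, Nat.cast_mul, smul_eq_mul]
  ring

lemma posSemidef_antisymState : (antisymState d).PosSemidef :=
  nonneg_iff_posSemidef.mp (smul_nonneg (by positivity) (isStarProjection_asymProj d).nonneg)

lemma trace_antisymState (hd : 2 ≤ d) : (antisymState d).trace = 1 := by
  have : (d.choose 2 : ℂ) ≠ 0 := by exact_mod_cast (Nat.choose_pos hd).ne'
  rw [antisymState, trace_smul, trace_asymProj, smul_eq_mul, one_div_mul_cancel this]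

lemma asymProj_mul_antisymState : asymProj d * antisymState d = antisymState d := by
  rw [antisymState, mul_smul_comm, (isStarProjection_asymProj d).isIdempotentElem.eq]

lemma alphaPow_eq_submatrix : alphaPow d n = (piKronecker fun _ => antisymState d).submatrix
    (Equiv.arrowProdEquivProdArrow (Fin n) _ _).symm
    (Equiv.arrowProdEquivProdArrow (Fin n) _ _).symm :=
  rfl

lemma asymPow_eq_submatrix : asymPow d n = (piKronecker fun _ => asymProj d).submatrix
    (Equiv.arrowProdEquivProdArrow (Fin n) _ _).symm
    (Equiv.arrowProdEquivProdArrow (Fin n) _ _).symm :=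
  rfl

lemma posSemidef_alphaPow : (alphaPow d n).PosSemidef := by
  rw [alphaPow_eq_submatrix]
  exact (posSemidef_piKronecker fun _ => posSemidef_antisymState).submatrix _

lemma trace_alphaPow (hd : 2 ≤ d) : (alphaPow d n).trace = 1 := by
  calc (alphaPow d n).trace = (piKronecker fun _ : Fin n => antisymState d).trace := by
        rw [alphaPow_eq_submatrix]
        exact (Equiv.arrowProdEquivProdArrow (Fin n) _ _).symm.sum_comp
          fun x => piKronecker (fun _ => antisymState d) x x
    _ = 1 := by simp only [trace_piKronecker, trace_antisymState hd, Finset.prod_const_one]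

lemma asymPow_mul_alphaPow : asymPow d n * alphaPow d n = alphaPow d n := by
  rw [asymPow_eq_submatrix, alphaPow_eq_submatrix, submatrix_mul_equiv, ← piKronecker_mul]
  simp only [asymProj_mul_antisymState]

lemma piKronecker_asymProj_mulVec_sitewise (ψ : (Fin n → Fin d) × (Fin n → Fin d) → ℂ) :
    piKronecker (fun _ => asymProj d) *ᵥ sitewise ψ = sitewise (asymPow d n *ᵥ ψ) := by
  rw [asymPow_eq_submatrix, submatrix_mulVec_equiv]
  rfl

end AntisymmetricState

/-- For all integers `d ≥ 2` and `n ≥ 1`,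
`E_F(α_d^{⊗n}) ≥ n log₂(4/3)`. -/
theorem EoF_alphaPow_lower_bound (d n : ℕ) (hd : 2 ≤ d) (hn : 1 ≤ n) :
    (n : ℝ) * Real.logb 2 (4 / 3) ≤ EoF (alphaPow d n) := by
  refine le_EoF posSemidef_alphaPow (trace_alphaPow hd) asymPow_mul_alphaPow fun ψ hunit hsupp => ?_
  set ρ := ptraceSnd (vecMulVec ψ (star ψ))
  have hρ : ρ.PosSemidef := posSemidef_ptraceSnd_vecMulVec ψ
  have htr : ρ.trace = 1 := by
    rw [trace_ptraceSnd, trace_vecMulVec, dotProduct_comm, hunit]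
  have hsite := piKronecker_asymProj_mulVec_sitewise ψ
  rw [hsupp] at hsite
  have hpurity : (ρ * ρ).trace ≤ ((3 / 4) ^ n : ℝ) := by
    simpa using trace_ptraceSnd_mul_self_le hsite hunit
  calc (n : ℝ) * Real.logb 2 (4 / 3) = -Real.logb 2 ((3 / 4) ^ n) := by
        rw [Real.logb_pow, ← inv_div (4 : ℝ) 3, Real.logb_inv, mul_neg, neg_neg]
    _ ≤ vnEntropy ρ := neg_logb_le_vnEntropy hρ htr hpurity

end
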